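/- Let N ≥ 1 and let D be a bounded domain in ℂ^N that is homogeneous, i.e. for all p, q ∈ D there exists a holomorphic bijection of D onto itself, with holomorphic inverse, sending p to q. Let M be a bounded domain in ℂ^N such that for every compact K ⊆ M there is an injective holomorphic map f_K : D → M with K ⊆ f_K(D). Then there exists a holomorphic bijection from D onto M with holomorphic inverse. -/

import Mathlib

open Filter Topology Set Metric

section

variable {E F : Type*} [NormedAddCommGroup E] [NormedSpace ℂ E]
  [NormedAddCommGroup F] [NormedSpace ℂ F]

theorem dist_le_of_norm_le_on_ball {f : E → F} {c y : E} {R C : ℝ}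
    (hd : DifferentiableOn ℂ f (ball c R)) (hC : ∀ y ∈ ball c R, ‖f y‖ ≤ C)
    (hy : y ∈ ball c R) : dist (f y) (f c) ≤ 2 * C / R * dist y c := by
  have hR : 0 < R := nonempty_ball.mp ⟨_, hy⟩
  refine Complex.dist_le_div_mul_dist_of_mapsTo_ball hd (fun x hx => ?_) hy
  have h₁ := hC x hx
  have h₂ := hC c (mem_ball_self hR)
  rw [mem_closedBall, dist_eq_norm]
  linarith [norm_sub_le (f x) (f c)]

theorem norm_fderiv_le_of_norm_le_on_ball {f : E → F} {c : E} {R C : ℝ} (hR : 0 < R)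
    (hd : DifferentiableOn ℂ f (ball c R)) (hC : ∀ y ∈ ball c R, ‖f y‖ ≤ C) :
    ‖fderiv ℂ f c‖ ≤ 2 * C / R := by
  refine Complex.norm_fderiv_le_div_of_mapsTo_ball hd (fun x hx => ?_) hR
  have h₁ := hC x hx
  have h₂ := hC c (mem_ball_self hR)
  rw [mem_closedBall, dist_eq_norm]
  linarith [norm_sub_le (f x) (f c)]

theorem norm_sub_sub_fderiv_le_of_norm_le_on_ball {f : E → F} {c y : E} {R C : ℝ}
    (hd : DifferentiableOn ℂ f (ball c R)) (hC : ∀ y ∈ ball c R, ‖f y‖ ≤ C)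
    (hy : y ∈ ball c R) :
    ‖f y - f c - fderiv ℂ f c (y - c)‖ ≤ 4 * C * (‖y - c‖ / R) ^ 2 := by
  have hR : 0 < R := nonempty_ball.mp ⟨_, hy⟩
  have hC0 : 0 ≤ C := (norm_nonneg _).trans (hC y hy)
  have hfc : HasFDerivAt f (fderiv ℂ f c) c :=
    (hd.differentiableAt (ball_mem_nhds c hR)).hasFDerivAt
  have key := Complex.dist_le_mul_div_pow_of_mapsTo_ball_of_isLittleO (n := 1)
    (f := fun x => f x - fderiv ℂ f c (x - c)) (c := c) (R₁ := R) (R₂ := 4 * C) (z := y)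
    (hd.sub (by fun_prop)) (fun x hx => ?_) ?_ hy
  · simpa [dist_eq_norm, sub_right_comm] using key
  · have h₁ := hC x hx
    have h₂ := hC c (mem_ball_self hR)
    have h₃ : ‖fderiv ℂ f c (x - c)‖ ≤ 2 * C := by
      refine ((fderiv ℂ f c).le_opNorm _).trans ?_
      have h₄ : ‖x - c‖ ≤ R := by simpa [dist_eq_norm] using (mem_ball.mp hx).le
      calc ‖fderiv ℂ f c‖ * ‖x - c‖ ≤ 2 * C / R * R := by
            gcongr
            exact norm_fderiv_le_of_norm_le_on_ball hR hd hC
        _ = 2 * C := by field_simp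
    rw [mem_closedBall, dist_eq_norm]
    simp only [sub_self, map_zero, sub_zero]
    have := norm_sub_le (f x - fderiv ℂ f c (x - c)) (f c)
    linarith [norm_sub_le (f x) (fderiv ℂ f c (x - c))]
  · have := hfc.isLittleO
    simpa [sub_right_comm] using this.norm_right

theorem tendsto_apply_of_norm_le_on_ball {ι : Type*} {l : Filter ι} {f : ι → E → F} {c : E}
    {w : F} {x : ι → E} {R C : ℝ} (hR : 0 < R)
    (hf : ∀ᶠ i in l, DifferentiableOn ℂ (f i) (ball c R) ∧ ∀ y ∈ ball c R, ‖f i y‖ ≤ C)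
    (hx : Tendsto x l (𝓝 c)) (hw : Tendsto (fun i => f i c) l (𝓝 w)) :
    Tendsto (fun i => f i (x i)) l (𝓝 w) := by
  refine hw.congr_dist ?_
  have h₀ : Tendsto (fun i => 2 * C / R * dist (x i) c) l (𝓝 0) := by
    simpa using (tendsto_iff_dist_tendsto_zero.mp hx).const_mul (2 * C / R)
  refine squeeze_zero' (Eventually.of_forall fun _ => dist_nonneg) ?_ h₀
  filter_upwards [hf, hx.eventually (ball_mem_nhds c hR)] with i hi hxi
  rw [dist_comm]
  exact dist_le_of_norm_le_on_ball hi.1 hi.2 hxi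

theorem Ultrafilter.exists_tendsto_of_norm_le {ι F : Type*} [SeminormedAddCommGroup F]
    [ProperSpace F] (l : Ultrafilter ι) {x : ι → F} {C : ℝ} (h : ∀ᶠ i in (l : Filter ι), ‖x i‖ ≤ C) :
    ∃ y, Tendsto x l (𝓝 y) := by
  obtain ⟨y, -, hy⟩ := (isCompact_closedBall (0 : F) C).ultrafilter_le_nhds (l.map x)
    (by
      rw [Ultrafilter.coe_map, le_principal_iff, Filter.mem_map]
      filter_upwards [h] with i hi
      simpa using hi)
  exact ⟨y, hy⟩

theorem hasFDerivAt_of_ultrafilter_tendsto [FiniteDimensional ℂ E] [FiniteDimensional ℂ F]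
    {ι : Type*} {l : Ultrafilter ι} {f : ι → E → F} {g : E → F} {c : E} {R C : ℝ} (hR : 0 < R)
    (hf : ∀ᶠ i in (l : Filter ι),
      DifferentiableOn ℂ (f i) (ball c R) ∧ ∀ y ∈ ball c R, ‖f i y‖ ≤ C)
    (hg : ∀ y ∈ ball c R, Tendsto (fun i => f i y) l (𝓝 (g y))) :
    DifferentiableAt ℂ g c ∧ Tendsto (fun i => fderiv ℂ (f i) c) l (𝓝 (fderiv ℂ g c)) := by
  have : ProperSpace (E →L[ℂ] F) := FiniteDimensional.proper ℂ _
  obtain ⟨L, hL⟩ := l.exists_tendsto_of_norm_le (x := fun i => fderiv ℂ (f i) c)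
    (hf.mono fun i hi => norm_fderiv_le_of_norm_le_on_ball hR hi.1 hi.2)
  suffices h : HasFDerivAt g L c from ⟨h.differentiableAt, h.fderiv ▸ hL⟩
  have hbound : ∀ y ∈ ball c R, ‖g y - g c - L (y - c)‖ ≤ 4 * C * (‖y - c‖ / R) ^ 2 := by
    intro y hy
    have hlim : Tendsto (fun i => ‖f i y - f i c - fderiv ℂ (f i) c (y - c)‖) l
        (𝓝 ‖g y - g c - L (y - c)‖) :=
      (((hg y hy).sub (hg c (mem_ball_self hR))).sub
        (((ContinuousLinearMap.apply ℂ F (y - c)).continuous.tendsto L).comp hL)).norm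
    exact le_of_tendsto hlim
      (hf.mono fun i hi => norm_sub_sub_fderiv_le_of_norm_le_on_ball hi.1 hi.2 hy)
  rw [hasFDerivAt_iff_isLittleO]
  have hO : (fun y => g y - g c - L (y - c)) =O[𝓝 c] fun y => ‖y - c‖ ^ 2 := by
    refine Asymptotics.IsBigO.of_bound (4 * C / R ^ 2) ?_
    filter_upwards [ball_mem_nhds c hR] with y hy
    refine (hbound y hy).trans (le_of_eq ?_)
    simp
    ring
  refine hO.trans_isLittleO ?_
  have := (Asymptotics.isLittleO_norm_pow_id (E' := E) one_lt_two).comp_tendsto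
    (k := fun y => y - c) (l' := 𝓝 c) (by simpa using (tendsto_id (x := 𝓝 c)).sub_const c)
  exact this

theorem DifferentiableOn.fderiv_of_isOpen [FiniteDimensional ℂ E] [FiniteDimensional ℂ F]
    {f : E → F} {U : Set E} (hf : DifferentiableOn ℂ f U) (hU : IsOpen U) :
    DifferentiableOn ℂ (fderiv ℂ f) U := by
  intro c hc
  have hfc := hf.differentiableAt (hU.mem_nhds hc)
  obtain ⟨r, hr, hrb⟩ := Metric.eventually_nhds_iff_ball.mp
    ((hfc.continuousAt.norm.eventually (gt_mem_nhds (lt_add_one ‖f c‖))).and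
      (hU.eventually_mem hc))
  suffices h : ∀ v, DifferentiableAt ℂ (fun z => fderiv ℂ f z v) c by
    let e₁ := ContinuousLinearEquiv.ofFinrankEq
      (Module.finrank_fin_fun (n := Module.finrank ℂ E) ℂ).symm
    let e₂ := (e₁.arrowCongr (1 : F ≃L[ℂ] F)).trans (ContinuousLinearEquiv.piRing (Fin _))
    rw [← e₂.comp_differentiableWithinAt_iff, differentiableWithinAt_pi]
    exact fun i => (h _).differentiableWithinAt
  intro v
  set C := ‖f c‖ + 1
  have hd : ∀ z ∈ ball c r, DifferentiableAt ℂ f z := fun z hz =>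
    hf.differentiableAt (hU.mem_nhds (hrb z hz).2)
  have hcast : Tendsto (fun k : ℕ => ‖(k : ℂ)‖) (hyperfilter ℕ) atTop := by
    simpa using tendsto_natCast_atTop_atTop.mono_left Nat.hyperfilter_le_atTop
  refine (hasFDerivAt_of_ultrafilter_tendsto (l := hyperfilter ℕ) (half_pos hr)
    (f := fun k z => (k : ℂ) • (f (z + (k : ℂ)⁻¹ • v) - f z))
    (C := 2 * C / (r / 2) * ‖v‖) ?_ fun z hz => ?_).1
  · have hev : ∀ᶠ k : ℕ in hyperfilter ℕ, ‖(k : ℂ)⁻¹ • v‖ < r / 2 ∧ 0 < ‖(k : ℂ)‖ := by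
      refine Eventually.and ?_ (hcast.eventually_gt_atTop 0)
      have : Tendsto (fun k : ℕ => ‖(k : ℂ)⁻¹ • v‖) (hyperfilter ℕ) (𝓝 0) := by
        simpa [norm_smul] using hcast.inv_tendsto_atTop.mul_const ‖v‖
      exact this.eventually (gt_mem_nhds (half_pos hr))
    filter_upwards [hev] with k hk
    have hmem : ∀ z ∈ ball c (r / 2), z + (k : ℂ)⁻¹ • v ∈ ball c r := by
      intro z hz
      rw [mem_ball, dist_eq_norm] at hz ⊢
      calc ‖z + (k : ℂ)⁻¹ • v - c‖ = ‖(z - c) + (k : ℂ)⁻¹ • v‖ := by congr 1; abel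
        _ < r := by linarith [norm_add_le (z - c) ((k : ℂ)⁻¹ • v), hk.1]
    refine ⟨fun z hz => ?_, fun z hz => ?_⟩
    · have h₁ := hd z (ball_subset_ball (by linarith) hz)
      have h₂ := (hd _ (hmem z hz)).comp z (differentiableAt_id.add_const ((k : ℂ)⁻¹ • v))
      exact ((h₂.sub h₁).const_smul (k : ℂ)).differentiableWithinAt
    · have hsub : ball z (r / 2) ⊆ ball c r := by
        refine ball_subset_ball' ?_
        linarith [mem_ball.mp hz]
      have h₁ := dist_le_of_norm_le_on_ball (f := f) (c := z) (y := z + (k : ℂ)⁻¹ • v)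
        (R := r / 2) (C := C) (fun x hx => (hd x (hsub hx)).differentiableWithinAt)
        (fun x hx => (hrb x (hsub hx)).1.le) (by simpa using hk.1)
      rw [dist_eq_norm, dist_eq_norm, add_sub_cancel_left, norm_smul, norm_inv] at h₁
      rw [norm_smul]
      calc ‖(k : ℂ)‖ * ‖f (z + (k : ℂ)⁻¹ • v) - f z‖
          ≤ ‖(k : ℂ)‖ * (2 * C / (r / 2) * (‖(k : ℂ)‖⁻¹ * ‖v‖)) := by gcongr
        _ = 2 * C / (r / 2) * ‖v‖ := by
          have := hk.2.ne'
          field_simp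
  · exact (hd z (ball_subset_ball (by linarith) hz)).hasFDerivAt.lim v hcast

theorem DifferentiableOn.contDiffOn_of_isOpen [FiniteDimensional ℂ E] [FiniteDimensional ℂ F]
    {f : E → F} {U : Set E} (hf : DifferentiableOn ℂ f U) (hU : IsOpen U) :
    ContDiffOn ℂ 1 f U := by
  rw [← zero_add (1 : WithTop ℕ∞), contDiffOn_succ_iff_fderiv_of_isOpen hU, contDiffOn_zero]
  exact ⟨hf, by simp, (hf.fderiv_of_isOpen hU).continuousOn⟩

theorem DifferentiableOn.hasStrictFDerivAt [FiniteDimensional ℂ E] [FiniteDimensional ℂ F]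
    {f : E → F} {U : Set E} (hf : DifferentiableOn ℂ f U) (hU : IsOpen U) {a : E} (ha : a ∈ U) :
    HasStrictFDerivAt f (fderiv ℂ f a) a :=
  ((hf.contDiffOn_of_isOpen hU).contDiffAt (hU.mem_nhds ha)).hasStrictFDerivAt one_ne_zero

theorem differentiable_det [FiniteDimensional ℂ E] :
    Differentiable ℂ (fun A : E →L[ℂ] E => A.det) := by
  let b := Module.finBasis ℂ E
  have h : (fun A : E →L[ℂ] E => A.det) =
      fun A : E →L[ℂ] E => ∑ σ : Equiv.Perm (Fin (Module.finrank ℂ E)),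
        (Equiv.Perm.sign σ : ℤ) • ∏ i, (b.equivFunL (A (b i))) (σ i) := by
    ext A
    rw [ContinuousLinearMap.det, ← LinearMap.det_toMatrix b, Matrix.det_apply]
    simp [LinearMap.toMatrix_apply, Units.smul_def]
  rw [h]
  have : ∀ i j, Differentiable ℂ fun A : E →L[ℂ] E => (b.equivFunL (A (b i))) j := by
    intro i j
    exact ((ContinuousLinearMap.proj j).comp (b.equivFunL.toContinuousLinearMap.comp
      (ContinuousLinearMap.apply ℂ E (b i)))).differentiable
  fun_prop

theorem ContinuousLinearMap.det_ne_zero_iff_injective [FiniteDimensional ℂ E] {A : E →L[ℂ] E} :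
    A.det ≠ 0 ↔ Function.Injective A := by
  rw [ContinuousLinearMap.det, ← isUnit_iff_ne_zero, ← LinearMap.isUnit_iff_isUnit_det,
    LinearMap.isUnit_iff_ker_eq_bot, LinearMap.ker_eq_bot]
  rfl

end

theorem exists_eq_zero_of_norm_lt_on_sphere {k : ℂ → ℂ} {z₀ : ℂ} {r m : ℝ} (hr : 0 < r)
    (hk : DifferentiableOn ℂ k (closedBall z₀ r)) (hm : ∀ t ∈ sphere z₀ r, m ≤ ‖k t‖)
    (h₀ : ‖k z₀‖ < m) : ∃ t ∈ closedBall z₀ r, k t = 0 := by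
  by_contra! hne
  have hm0 : 0 < m := (norm_nonneg _).trans_lt h₀
  have hd : DiffContOnCl ℂ (fun t => (k t)⁻¹) (ball z₀ r) := by
    refine DifferentiableOn.diffContOnCl ?_
    rw [closure_ball _ hr.ne']
    exact hk.inv hne
  have h := Complex.norm_le_of_forall_mem_frontier_norm_le isBounded_ball hd (C := m⁻¹)
    (fun t ht => ?_) (z := z₀) (subset_closure (mem_ball_self hr))
  · rw [norm_inv, inv_le_inv₀ (norm_pos_iff.mpr (hne z₀ (mem_closedBall_self hr.le))) hm0] at h
    linarith
  · rw [frontier_ball _ hr.ne'] at ht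
    rw [norm_inv]
    exact inv_anti₀ hm0 (hm t ht)

/-- An injective holomorphic function of one variable has nonvanishing derivative. -/
theorem deriv_ne_zero_of_injOn {f : ℂ → ℂ} {U : Set ℂ} (hU : IsOpen U)
    (hf : DifferentiableOn ℂ f U) (hinj : InjOn f U) {a : ℂ} (ha : a ∈ U) : deriv f a ≠ 0 := by
  intro h0
  obtain ⟨R, hR, hRU⟩ := Metric.isOpen_iff.mp hU a ha
  set r := R / 2
  have hr : 0 < r := half_pos hR
  have hcb : closedBall a r ⊆ U := (closedBall_subset_ball (half_lt_self hR)).trans hRU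
  have hslope : ∀ s ∈ U, ∀ t ∈ U, s ≠ t → dslope f s t ≠ 0 := by
    intro s hs t ht hst h
    rw [dslope_of_ne _ hst.symm, slope_def_field, div_eq_zero_iff] at h
    rcases h with h | h
    · exact hst (hinj hs ht (sub_eq_zero.mp h).symm)
    · exact hst (sub_eq_zero.mp h).symm
  have hcont : ∀ t ∈ U, t ≠ a → ContinuousAt (fun p : ℂ × ℂ => dslope f p.1 p.2) (a, t) := by
    intro t ht hta
    have h₁ : ContinuousAt (fun p : ℂ × ℂ => (f p.2 - f p.1) / (p.2 - p.1)) (a, t) := by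
      refine ContinuousAt.div ?_ (by fun_prop) (sub_ne_zero.mpr hta)
      exact ((hf.continuousOn.continuousAt (hU.mem_nhds ht)).comp (x := (a, t))
        continuousAt_snd).sub ((hf.continuousOn.continuousAt (hU.mem_nhds ha)).comp
          (x := (a, t)) continuousAt_fst)
    refine h₁.congr ?_
    have : ∀ᶠ p : ℂ × ℂ in 𝓝 (a, t), p.2 ≠ p.1 :=
      (isOpen_ne_fun continuous_snd continuous_fst).mem_nhds hta
    filter_upwards [this] with p hp
    rw [dslope_of_ne _ hp, slope_def_field]
  obtain ⟨t₀, ht₀, hmin⟩ := (isCompact_sphere a r).exists_isMinOn (f := fun t => ‖dslope f a t‖)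
    (NormedSpace.sphere_nonempty.mpr hr.le) (fun t ht => by
      refine ContinuousAt.continuousWithinAt (ContinuousAt.norm ?_)
      exact (continuousAt_dslope_of_ne (ne_of_mem_sphere ht hr.ne')).mpr
        (hf.continuousOn.continuousAt (hU.mem_nhds (hcb (sphere_subset_closedBall ht)))))
  set m := ‖dslope f a t₀‖ / 2
  have hm : 0 < m := half_pos (norm_pos_iff.mpr (hslope a ha t₀
    (hcb (sphere_subset_closedBall ht₀)) (ne_of_mem_sphere ht₀ hr.ne').symm))
  have h₁ : ∀ᶠ s in 𝓝 a, ∀ t ∈ sphere a r, m < ‖dslope f s t‖ := by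
    refine (isCompact_sphere a r).eventually_forall_of_forall_eventually fun t ht => ?_
    have hta := ne_of_mem_sphere ht hr.ne'
    have := (hcont t (hcb (sphere_subset_closedBall ht)) hta).norm
    refine this.eventually (lt_mem_nhds ?_)
    exact (half_lt_self (by linarith [show m = ‖dslope f a t₀‖ / 2 from rfl])).trans_le (hmin ht)
  have h₂ : ∀ᶠ s in 𝓝 a, ‖dslope f s a‖ < m := by
    have hc : ContinuousAt (dslope f a) a :=
      continuousAt_dslope_same.mpr (hf.differentiableAt (hU.mem_nhds ha))
    have := hc.norm.eventually (gt_mem_nhds (a := m) (by simpa [h0] using hm))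
    filter_upwards [this] with s hs
    have hsymm : dslope f s a = dslope f a s := by
      rcases eq_or_ne s a with rfl | hne
      · rfl
      · rw [dslope_of_ne _ hne, dslope_of_ne _ hne.symm, slope_comm]
    rwa [hsymm]
  have h₃ : ∀ᶠ s in 𝓝 a, deriv f s = 0 := by
    filter_upwards [h₁, h₂, hU.mem_nhds ha] with s hs₁ hs₂ hsU
    have hds : DifferentiableOn ℂ (dslope f s) U :=
      (Complex.differentiableOn_dslope (hU.mem_nhds hsU)).mpr hf
    obtain ⟨t, ht, ht0⟩ := exists_eq_zero_of_norm_lt_on_sphere hr (hds.mono hcb)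
      (fun t ht => (hs₁ t ht).le) hs₂
    rcases eq_or_ne s t with rfl | hne
    · simpa using ht0
    · exact absurd ht0 (hslope s hsU t (hcb ht) hne)
  obtain ⟨ε, hε, hεb⟩ := Metric.eventually_nhds_iff_ball.mp (h₃.and (hU.eventually_mem ha))
  have hy : a + (ε / 2 : ℝ) ∈ ball a ε := by
    simp [abs_of_pos hε]
    linarith
  have hconst : f a = f (a + (ε / 2 : ℝ)) := isOpen_ball.is_const_of_deriv_eq_zero
    (convex_ball a ε).isPreconnected (hf.mono fun x hx => (hεb x hx).2)
    (fun x hx => (hεb x hx).1) (mem_ball_self hε) hy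
  have := hinj ha (hεb _ hy).2 hconst
  simp [hε.ne'] at this

theorem iterate_fderiv_snd_eq_iteratedDeriv {W : Set (ℂ × ℂ)} (hW : IsOpen W)
    {h : ℂ × ℂ → ℂ} (hh : DifferentiableOn ℂ h W) (k : ℕ) :
    DifferentiableOn ℂ ((fun (g : ℂ × ℂ → ℂ) p => fderiv ℂ g p (0, 1))^[k] h) W ∧
    ∀ p ∈ W, (fun (g : ℂ × ℂ → ℂ) p => fderiv ℂ g p (0, 1))^[k] h p =
      iteratedDeriv k (fun t => h (p.1, t)) p.2 := by
  induction k with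
  | zero => exact ⟨hh, fun p _ => by simp⟩
  | succ k ih =>
    rw [Function.iterate_succ_apply']
    refine ⟨(ih.1.fderiv_of_isOpen hW).clm_apply (differentiableOn_const _), fun p hp => ?_⟩
    rw [iteratedDeriv_succ]
    set g := (fun (g : ℂ × ℂ → ℂ) p => fderiv ℂ g p (0, 1))^[k] h
    have hev : ∀ᶠ t in 𝓝 p.2, iteratedDeriv k (fun t => h (p.1, t)) t = g (p.1, t) := by
      have hc : ContinuousAt (fun t => (p.1, t)) p.2 := by fun_prop
      filter_upwards [hc.eventually (hW.mem_nhds hp)] with t ht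
      exact (ih.2 _ ht).symm
    rw [EventuallyEq.deriv_eq hev]
    have h₁ : HasFDerivAt g (fderiv ℂ g p) (p.1, p.2) :=
      (ih.1.differentiableAt (hW.mem_nhds hp)).hasFDerivAt
    have h₂ : HasDerivAt (fun t => (p.1, t)) ((0 : ℂ), (1 : ℂ)) p.2 :=
      (hasDerivAt_const _ _).prodMk (hasDerivAt_id _)
    exact (h₁.comp_hasDerivAt p.2 h₂).deriv.symm

/-- A map whose differential vanishes on a plane analytic curve is constant along an arc of
the curve, hence is not injective. -/
theorem not_injOn_of_fderiv_eq_zero_on_zero_set {G : Type*} [NormedAddCommGroup G]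
    [NormedSpace ℂ G] {W : Set (ℂ × ℂ)} (hW : IsOpen W) {h : ℂ × ℂ → ℂ}
    (hh : DifferentiableOn ℂ h W) {F : ℂ × ℂ → G} (hF : DifferentiableOn ℂ F W)
    (hF0 : ∀ p ∈ W, h p = 0 → fderiv ℂ F p = 0) {p₀ : ℂ × ℂ} (hp₀ : p₀ ∈ W) (hhp₀ : h p₀ = 0)
    (hne : ¬ ∀ᶠ t in 𝓝 p₀.2, h (p₀.1, t) = 0) : ¬ InjOn F W := by
  intro hinj
  have hslice : ∀ p : ℂ × ℂ, ContinuousAt (fun t : ℂ => (p.1, t)) p.2 := fun p => by fun_prop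
  have hanal : ∀ p ∈ W, AnalyticAt ℂ (fun t => h (p.1, t)) p.2 := by
    intro p hp
    rw [Complex.analyticAt_iff_eventually_differentiableAt]
    filter_upwards [(hslice p).eventually (hW.mem_nhds hp)] with t ht
    exact (hh.differentiableAt (hW.mem_nhds ht)).comp t (by fun_prop)
  set D := fun (g : ℂ × ℂ → ℂ) p => fderiv ℂ g p (0, 1)
  have hex : ∃ m, ∃ p ∈ W, h p = 0 ∧ D^[m] h p ≠ 0 := by
    by_contra! hall
    refine hne (analyticOrderAt_eq_top.mp (ENat.eq_top_iff_forall_ge.mpr fun n => ?_))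
    rw [natCast_le_analyticOrderAt_iff_iteratedDeriv_eq_zero (hanal p₀ hp₀)]
    intro i _
    rw [← (iterate_fderiv_snd_eq_iteratedDeriv hW hh i).2 p₀ hp₀]
    exact hall i p₀ hp₀ hhp₀
  classical
  obtain ⟨b, hb, hhb, hmb⟩ := Nat.find_spec hex
  obtain ⟨m, hm⟩ : ∃ m, Nat.find hex = m + 1 := by
    refine Nat.exists_eq_succ_of_ne_zero fun h0 => ?_
    rw [h0] at hmb
    exact hmb hhb
  rw [hm, Function.iterate_succ_apply'] at hmb
  set g := D^[m] h
  have hgd : DifferentiableOn ℂ g W := (iterate_fderiv_snd_eq_iteratedDeriv hW hh m).1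
  have hg0 : ∀ p ∈ W, h p = 0 → g p = 0 := by
    intro p hp hhp
    by_contra hgp
    exact Nat.find_min hex (m := m) (by omega) ⟨p, hp, hhp, hgp⟩
  have hgb : ContDiffAt ℂ 1 g b := (hgd.contDiffOn_of_isOpen hW).contDiffAt (hW.mem_nhds hb)
  have hinv : (fderiv ℂ g b ∘L .inr ℂ ℂ ℂ).IsInvertible := by
    refine ⟨ContinuousLinearEquiv.unitsEquivAut ℂ (Units.mk0 _ hmb), ?_⟩
    ext
    simp [D]
  set ψ := hgb.implicitFunction one_ne_zero hinv
  have hψd : ContDiffAt ℂ 1 ψ b.1 := hgb.contDiffAt_implicitFunction one_ne_zero hinv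
  have hψd' : ∀ᶠ s in 𝓝 b.1, DifferentiableAt ℂ ψ s :=
    (hψd.eventually (by simp)).mono fun s hs => hs.differentiableAt one_ne_zero
  have hψu : ∀ᶠ v in 𝓝 b, g v = 0 → ψ v.1 = v.2 := by
    filter_upwards [hgb.eventually_apply_eq_iff_implicitFunction one_ne_zero hinv] with v hv hgv
    exact hv.mp (hgv.trans (hg0 b hb hhb).symm)
  have hbne : ∀ᶠ t in 𝓝[≠] b.2, h (b.1, t) ≠ 0 := by
    refine (hanal b hb).eventually_eq_zero_or_eventually_ne_zero.resolve_left fun hz => hmb ?_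
    have hgz : ∀ᶠ t in 𝓝 b.2, g (b.1, t) = 0 := by
      filter_upwards [hz, (hslice b).eventually (hW.mem_nhds hb)] with t ht htW
      exact hg0 _ htW ht
    have h₁ : HasFDerivAt g (fderiv ℂ g b) (b.1, b.2) :=
      (hgd.differentiableAt (hW.mem_nhds hb)).hasFDerivAt
    have h₂ : HasDerivAt (fun t => (b.1, t)) ((0 : ℂ), (1 : ℂ)) b.2 :=
      (hasDerivAt_const _ _).prodMk (hasDerivAt_id _)
    have h₃ := (h₁.comp_hasDerivAt b.2 h₂).deriv
    have h₄ : deriv (g ∘ fun t => (b.1, t)) b.2 = 0 :=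
      (EventuallyEq.deriv_eq (f := fun _ => (0 : ℂ)) hgz).trans (by simp)
    exact h₃.symm.trans h₄
  obtain ⟨ε, hε, hεb⟩ := Metric.eventually_nhds_iff_ball.mp (hψu.and (hW.eventually_mem hb))
  obtain ⟨δ, hδ, hδb⟩ := Metric.eventually_nhds_iff_ball.mp (eventually_nhdsWithin_iff.mp hbne)
  set r := min ε δ / 2
  have hr : 0 < r := half_pos (lt_min hε hδ)
  have hrε : r < ε := (half_lt_self (lt_min hε hδ)).trans_le (min_le_left _ _)
  have hrδ : r < δ := (half_lt_self (lt_min hε hδ)).trans_le (min_le_right _ _)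
  have hWmem : ∀ s ∈ ball b.1 ε, ∀ t ∈ closedBall b.2 r, (s, t) ∈ ball b ε := by
    intro s hs t ht
    rw [mem_ball, Prod.dist_eq, max_lt_iff]
    exact ⟨hs, (mem_closedBall.mp ht).trans_lt hrε⟩
  have hhc : ∀ s ∈ ball b.1 ε, ∀ t ∈ closedBall b.2 r, ContinuousAt h (s, t) := fun s hs t ht =>
    hh.continuousOn.continuousAt (hW.mem_nhds (hεb _ (hWmem s hs t ht)).2)
  have hb1 : b.1 ∈ ball b.1 ε := mem_ball_self hε
  obtain ⟨t₀, ht₀, hmin⟩ := (isCompact_sphere b.2 r).exists_isMinOn (f := fun t => ‖h (b.1, t)‖)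
    (NormedSpace.sphere_nonempty.mpr hr.le) (fun t ht => by
      refine ContinuousAt.continuousWithinAt (ContinuousAt.norm ?_)
      exact (hhc b.1 hb1 t (sphere_subset_closedBall ht)).comp
        (f := fun t : ℂ => (b.1, t)) (by fun_prop))
  obtain ⟨c, hc0, hc⟩ : ∃ c, 0 < c ∧ c < ‖h (b.1, t₀)‖ := by
    refine exists_between (norm_pos_iff.mpr (hδb t₀ ?_ (ne_of_mem_sphere ht₀ hr.ne')))
    exact (mem_sphere.mp ht₀).trans_lt hrδ
  have hev₁ : ∀ᶠ s in 𝓝 b.1, ∀ t ∈ sphere b.2 r, c < ‖h (s, t)‖ := by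
    refine (isCompact_sphere b.2 r).eventually_forall_of_forall_eventually fun t ht => ?_
    exact (hhc b.1 hb1 t (sphere_subset_closedBall ht)).norm.eventually
      (lt_mem_nhds (hc.trans_le (hmin ht)))
  have hev₂ : ∀ᶠ s in 𝓝 b.1, ‖h (s, b.2)‖ < c := by
    have hcont : ContinuousAt (fun s => h (s, b.2)) b.1 :=
      (hhc b.1 hb1 b.2 (mem_closedBall_self hr.le)).comp (f := fun s : ℂ => (s, b.2))
        (by fun_prop)
    exact hcont.norm.eventually (gt_mem_nhds (by simpa [hhb] using hc0))
  have hroot : ∀ᶠ s in 𝓝 b.1, (s, ψ s) ∈ W ∧ h (s, ψ s) = 0 := by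
    filter_upwards [hev₁, hev₂, ball_mem_nhds b.1 hε] with s hs₁ hs₂ hsε
    obtain ⟨t, ht, ht0⟩ := exists_eq_zero_of_norm_lt_on_sphere (k := fun t => h (s, t)) hr
      (fun t ht => ((hh.differentiableAt (hW.mem_nhds (hεb _ (hWmem s hsε t ht)).2)).comp t
        (f := fun t : ℂ => (s, t)) (by fun_prop)).differentiableWithinAt)
      (fun t ht => (hs₁ t ht).le) hs₂
    obtain ⟨hu, htW⟩ := hεb _ (hWmem s hsε t ht)
    have hst : ψ s = t := hu (hg0 _ htW ht0)
    rw [hst]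
    exact ⟨htW, ht0⟩
  obtain ⟨η, hη, hηb⟩ := Metric.eventually_nhds_iff_ball.mp (hroot.and hψd')
  have hderiv : ∀ s ∈ ball b.1 η, HasDerivAt (fun s => F (s, ψ s)) 0 s := by
    intro s hs
    obtain ⟨⟨hsW, hs0⟩, hsd⟩ := hηb s hs
    have h₁ : HasFDerivAt F (fderiv ℂ F (s, ψ s)) (s, ψ s) :=
      (hF.differentiableAt (hW.mem_nhds hsW)).hasFDerivAt
    have h₂ := h₁.comp_hasDerivAt s ((hasDerivAt_id s).prodMk hsd.hasDerivAt)
    rw [hF0 _ hsW hs0] at h₂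
    exact h₂
  have hy : b.1 + (η / 2 : ℝ) ∈ ball b.1 η := by
    simp [abs_of_pos hη]
    linarith
  have hconst : F (b.1, ψ b.1) = F (b.1 + (η / 2 : ℝ), ψ (b.1 + (η / 2 : ℝ))) :=
    isOpen_ball.is_const_of_deriv_eq_zero (f := fun s => F (s, ψ s))
      (convex_ball b.1 η).isPreconnected
      (fun s hs => (hderiv s hs).differentiableAt.differentiableWithinAt)
      (fun s hs => (hderiv s hs).deriv) (mem_ball_self hη) hy
  have := congrArg Prod.fst
    (hinj (hηb _ (mem_ball_self hη)).1.1 (hηb _ hy).1.1 hconst)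
  simp [hη.ne'] at this

section

variable {E : Type*} [NormedAddCommGroup E] [NormedSpace ℂ E] [FiniteDimensional ℂ E]

/-- Reduction step for `fderiv_injective_of_injOn`: restricting to a level set of a component of
`f` that is nonsingular at `a` lowers the dimension by one. -/
theorem fderiv_injective_of_fderiv_ne_zero {n : ℕ} (hn : Module.finrank ℂ E = n + 1)
    (ih : ∀ (K : Submodule ℂ E), Module.finrank ℂ K = n → ∀ (f : K → K) (U : Set K), IsOpen U →
      DifferentiableOn ℂ f U → InjOn f U → ∀ a ∈ U, Function.Injective (fderiv ℂ f a))
    {f : E → E} {U : Set E} (hU : IsOpen U) (hf : DifferentiableOn ℂ f U) (hinj : InjOn f U)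
    {a : E} (ha : a ∈ U) (hne : fderiv ℂ f a ≠ 0) : Function.Injective (fderiv ℂ f a) := by
  set L := fderiv ℂ f a
  obtain ⟨x, hx⟩ : ∃ x, L x ≠ 0 := by
    by_contra! h
    exact hne (ContinuousLinearMap.ext h)
  obtain ⟨ℓ, hℓ⟩ := SeparatingDual.exists_ne_zero (R := ℂ) hx
  have hker : ∀ φ : E →L[ℂ] ℂ, φ ≠ 0 → Module.finrank ℂ (φ : E →ₗ[ℂ] ℂ).ker = n := by
    intro φ hφ
    have h₁ := (φ : E →ₗ[ℂ] ℂ).finrank_range_add_finrank_ker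
    have h₂ : (φ : E →ₗ[ℂ] ℂ).range = ⊤ :=
      LinearMap.range_eq_top.mpr (LinearMap.surjective fun h0 => hφ (by ext v; exact LinearMap.congr_fun h0 v))
    rw [h₂, finrank_top, Module.finrank_self] at h₁
    omega
  set K := ((ℓ ∘L L : E →L[ℂ] ℂ) : E →ₗ[ℂ] ℂ).ker
  have hK : Module.finrank ℂ K = n := hker _ fun h0 => hℓ (DFunLike.congr_fun h0 x)
  have hK' : Module.finrank ℂ (ℓ : E →ₗ[ℂ] ℂ).ker = n :=
    hker _ fun h0 => hℓ (DFunLike.congr_fun h0 (L x))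
  have hKmem : ∀ k : K, ℓ (L k) = 0 := fun k => k.2
  obtain ⟨π₀, hπ₀⟩ := LinearMap.exists_extend
    (LinearEquiv.ofFinrankEq _ _ (hK'.trans hK.symm) :
      (ℓ : E →ₗ[ℂ] ℂ).ker ≃ₗ[ℂ] K).toLinearMap
  set π : E →L[ℂ] K := LinearMap.toContinuousLinearMap π₀
  have hπ : ∀ y, ℓ y = 0 → π y = 0 → y = 0 := by
    intro y hy hy'
    have h₁ := LinearMap.congr_fun hπ₀ ⟨y, hy⟩
    have h₂ : LinearEquiv.ofFinrankEq _ _ (hK'.trans hK.symm) ⟨y, hy⟩ = (0 : K) :=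
      h₁.symm.trans hy'
    have h₃ : (⟨y, hy⟩ : (ℓ : E →ₗ[ℂ] ℂ).ker) = 0 := by simpa using h₂
    exact congrArg Subtype.val h₃
  -- the level set of `ℓ ∘ f` through `a` is the graph of `ζ : K → ℂ`
  set A : K × ℂ →L[ℂ] E := (K.subtypeL).coprod (ContinuousLinearMap.toSpanSingleton ℂ x)
  have hA : ∀ k t, A (k, t) = k + t • x := fun k t => by simp [A]
  set Φ : K × ℂ → ℂ := fun p => ℓ (f (a + A p))
  have hV : IsOpen {p : K × ℂ | a + A p ∈ U} := hU.preimage (by fun_prop)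
  have h0V : (0 : K × ℂ) ∈ {p : K × ℂ | a + A p ∈ U} := by simpa using ha
  have hfA : ∀ p : K × ℂ, a + A p ∈ U →
      HasFDerivAt (fun p => f (a + A p)) (fderiv ℂ f (a + A p) ∘L A) p := fun p hp =>
    ((hf.differentiableAt (hU.mem_nhds hp)).hasFDerivAt).comp p (A.hasFDerivAt.const_add a)
  have hΦd : DifferentiableOn ℂ Φ {p : K × ℂ | a + A p ∈ U} := fun p hp =>
    (ℓ.hasFDerivAt.comp p (hfA p hp)).differentiableAt.differentiableWithinAt
  have hΦ0 : fderiv ℂ Φ 0 = ℓ ∘L L ∘L A := by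
    have : HasFDerivAt Φ (ℓ ∘L fderiv ℂ f (a + A 0) ∘L A) 0 :=
      ℓ.hasFDerivAt.comp (0 : K × ℂ) (hfA 0 h0V)
    rw [this.fderiv, map_zero, add_zero]
  have hΦc : ContDiffAt ℂ 1 Φ 0 := (hΦd.contDiffOn_of_isOpen hV).contDiffAt (hV.mem_nhds h0V)
  have hinv : (fderiv ℂ Φ 0 ∘L .inr ℂ K ℂ).IsInvertible := by
    refine ⟨ContinuousLinearEquiv.unitsEquivAut ℂ (Units.mk0 _ hℓ), ?_⟩
    ext
    simp [hΦ0, hA]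
  set ζ := hΦc.implicitFunction one_ne_zero hinv
  have hζ0 : ζ 0 = 0 := hΦc.implicitFunction_apply_self one_ne_zero hinv
  have hζd : ∀ᶠ k in 𝓝 0, DifferentiableAt ℂ ζ k :=
    ((hΦc.contDiffAt_implicitFunction one_ne_zero hinv).eventually (by simp)).mono
      fun s hs => hs.differentiableAt one_ne_zero
  have hζΦ : ∀ᶠ k in 𝓝 0, Φ (k, ζ k) = Φ 0 :=
    hΦc.eventually_apply_implicitFunction one_ne_zero hinv
  have hζ' : HasFDerivAt ζ (0 : K →L[ℂ] ℂ) 0 := by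
    have h := (hΦc.hasStrictFDerivAt_implicitFunction one_ne_zero hinv).hasFDerivAt
    have h₀ : fderiv ℂ Φ 0 ∘L .inl ℂ K ℂ = 0 := by
      ext k
      simp [hΦ0, hA, hKmem]
    simpa [h₀] using h
  have hζc : ContinuousAt (fun k : K => (k, ζ k)) 0 := continuousAt_id.prodMk hζ'.continuousAt
  have hζV : ∀ᶠ k : K in 𝓝 0, a + A (k, ζ k) ∈ U :=
    hζc.eventually (hV.mem_nhds (by simpa [hζ0, hA] using ha))
  obtain ⟨ε, hε, hεb⟩ := Metric.eventually_nhds_iff_ball.mp ((hζd.and hζΦ).and hζV)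
  have hgd : ∀ k ∈ ball (0 : K) ε, DifferentiableAt ℂ (fun k => π (f (a + A (k, ζ k)))) k := by
    intro k hk
    obtain ⟨⟨hkd, -⟩, hkU⟩ := hεb k hk
    exact π.differentiableAt.comp k ((hfA (k, ζ k) hkU).differentiableAt.comp k
      (f := fun k : K => (k, ζ k)) (differentiableAt_id.prodMk hkd))
  have hginj : InjOn (fun k : K => π (f (a + A (k, ζ k)))) (ball 0 ε) := by
    intro k hk k' hk' heq
    obtain ⟨⟨-, hkΦ⟩, hkU⟩ := hεb k hk
    obtain ⟨⟨-, hkΦ'⟩, hkU'⟩ := hεb k' hk'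
    have h₁ : f (a + A (k, ζ k)) - f (a + A (k', ζ k')) = 0 :=
      hπ _ (by rw [map_sub]; exact sub_eq_zero.mpr (hkΦ.trans hkΦ'.symm))
        (by rw [map_sub]; exact sub_eq_zero.mpr heq)
    have h₂ := hinj hkU hkU' (sub_eq_zero.mp h₁)
    rw [add_right_inj, hA, hA] at h₂
    have h₃ : ζ k = ζ k' := by
      have := congrArg (fun y => ℓ (L y)) h₂
      simpa [hKmem, hx, hℓ] using this
    rw [h₃, add_left_inj] at h₂
    exact Subtype.ext h₂
  have hg' : HasFDerivAt (fun k : K => π (f (a + A (k, ζ k)))) (π ∘L L ∘L K.subtypeL) 0 := by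
    have h₁ : HasFDerivAt (fun k : K => (k, ζ k))
        ((ContinuousLinearMap.id ℂ K).prod (0 : K →L[ℂ] ℂ)) 0 := (hasFDerivAt_id 0).prodMk hζ'
    have h₂ := π.hasFDerivAt.comp (0 : K) (HasFDerivAt.comp (0 : K)
      (hfA ((0 : K), ζ 0) (by simpa [hζ0, hA] using ha)) h₁)
    have h₃ : π ∘L (fderiv ℂ f (a + A (0, ζ 0)) ∘L A) ∘L
        ((ContinuousLinearMap.id ℂ K).prod (0 : K →L[ℂ] ℂ)) = π ∘L L ∘L K.subtypeL := by
      ext k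
      simp [hA, hζ0, L]
    rw [h₃] at h₂
    exact h₂
  have hfinal := ih K hK _ _ isOpen_ball
    (fun k hk => (hgd k hk).differentiableWithinAt) hginj 0 (mem_ball_self hε)
  rw [hg'.fderiv] at hfinal
  rw [injective_iff_map_eq_zero]
  intro y hy
  have hyK : y ∈ K := by
    change ℓ (L y) = 0
    rw [hy, map_zero]
  have := (injective_iff_map_eq_zero _).mp hfinal ⟨y, hyK⟩ (by simp [hy])
  simpa using this

/-- The derivative of an injective holomorphic self-map of a one-dimensional space is nonzero. -/
theorem fderiv_ne_zero_of_injOn_of_finrank_eq_one (h1 : Module.finrank ℂ E = 1)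
    {f : E → E} {U : Set E} (hU : IsOpen U) (hf : DifferentiableOn ℂ f U) (hinj : InjOn f U)
    {a : E} (ha : a ∈ U) : fderiv ℂ f a ≠ 0 := by
  intro h0
  let e : E ≃L[ℂ] ℂ := ContinuousLinearEquiv.ofFinrankEq (by simp [h1])
  have hV : IsOpen (e.symm ⁻¹' U) := hU.preimage e.symm.continuous
  have haV : e a ∈ e.symm ⁻¹' U := by simpa using ha
  have hcomp : ∀ t ∈ e.symm ⁻¹' U, HasFDerivAt (fun t => e (f (e.symm t)))
      ((e : E →L[ℂ] ℂ) ∘L fderiv ℂ f (e.symm t) ∘L (e.symm : ℂ →L[ℂ] E)) t := fun t ht =>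
    (e : E →L[ℂ] ℂ).hasFDerivAt.comp t
      ((hf.differentiableAt (hU.mem_nhds ht)).hasFDerivAt.comp t e.symm.hasFDerivAt)
  refine deriv_ne_zero_of_injOn hV
    (fun t ht => (hcomp t ht).differentiableAt.differentiableWithinAt) ?_ haV ?_
  · intro s hs t ht hst
    exact e.symm.injective (hinj hs ht (e.injective hst))
  · rw [← fderiv_apply_one_eq_deriv, (hcomp _ haV).fderiv]
    simp [h0]

/-- If the derivative of a holomorphic map in dimension at least two is either zero or injective
at each point, then injectivity of the map forces it to be nonzero. -/
theorem fderiv_ne_zero_of_injOn_of_one_lt_finrank (h1 : 1 < Module.finrank ℂ E)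
    {f : E → E} {U : Set E} (hU : IsOpen U) (hf : DifferentiableOn ℂ f U) (hinj : InjOn f U)
    (hdich : ∀ z ∈ U, fderiv ℂ f z ≠ 0 → Function.Injective (fderiv ℂ f z))
    {a : E} (ha : a ∈ U) : fderiv ℂ f a ≠ 0 := by
  intro h0
  have : Nontrivial E := Module.nontrivial_of_finrank_pos (R := ℂ) (by omega)
  obtain ⟨r, hr, hrU⟩ := Metric.isOpen_iff.mp hU a ha
  have hdet0 : ∀ z ∈ U, (fderiv ℂ f z).det = 0 → fderiv ℂ f z = 0 := by
    intro z hz hz0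
    by_contra hne
    exact ContinuousLinearMap.det_ne_zero_iff_injective.mpr (hdich z hz hne) hz0
  have hdetd : DifferentiableOn ℂ (fun z => (fderiv ℂ f z).det) U :=
    Differentiable.comp_differentiableOn (g := fun A : E →L[ℂ] E => A.det) differentiable_det
      (hf.fderiv_of_isOpen hU)
  have hdeta : (fderiv ℂ f a).det = 0 := by
    by_contra hne
    have := ContinuousLinearMap.det_ne_zero_iff_injective.mp hne
    obtain ⟨x, hx⟩ := exists_ne (0 : E)
    exact hx (this (by simp [h0]))
  obtain ⟨b, hb, hbdet⟩ : ∃ b ∈ ball a r, (fderiv ℂ f b).det ≠ 0 := by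
    by_contra! hall
    obtain ⟨b, hb, hba⟩ : ∃ b ∈ ball a r, b ≠ a := by
      obtain ⟨x, hx⟩ := exists_ne (0 : E)
      have hx' : 0 < ‖x‖ := norm_pos_iff.mpr hx
      refine ⟨a + ((r / 2 / ‖x‖ : ℝ) : ℂ) • x, ?_, ?_⟩
      · rw [mem_ball, dist_self_add_left, norm_smul, Complex.norm_real, Real.norm_of_nonneg
          (by positivity), div_mul_cancel₀ _ hx'.ne']
        linarith
      · simp [hx, hr.ne']
    have hc := isOpen_ball.is_const_of_fderiv_eq_zero (convex_ball a r).isPreconnected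
      (hf.mono hrU) (fun z hz => hdet0 z (hrU hz) (hall z hz)) hb (mem_ball_self hr)
    exact hba (hinj (hrU hb) ha hc)
  set v := b - a
  have hv : v ≠ 0 := by
    rintro h
    rw [sub_eq_zero.mp h] at hbdet
    exact hbdet hdeta
  obtain ⟨u, hu⟩ := exists_linearIndependent_pair_of_one_lt_finrank h1 hv
  set A : ℂ × ℂ →L[ℂ] E := (ContinuousLinearMap.toSpanSingleton ℂ u).coprod
    (ContinuousLinearMap.toSpanSingleton ℂ v)
  have hA : ∀ s t, A (s, t) = s • u + t • v := fun s t => by simp [A]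
  have hAinj : Function.Injective A := by
    rw [injective_iff_map_eq_zero]
    rintro ⟨s, t⟩ hst
    rw [hA, add_comm] at hst
    obtain ⟨rfl, rfl⟩ := LinearIndependent.pair_iff.mp hu t s hst
    rfl
  have hW : IsOpen {p : ℂ × ℂ | a + A p ∈ U} := hU.preimage (by fun_prop)
  have hfA : ∀ p : ℂ × ℂ, a + A p ∈ U →
      HasFDerivAt (fun p => f (a + A p)) (fderiv ℂ f (a + A p) ∘L A) p := fun p hp =>
    ((hf.differentiableAt (hU.mem_nhds hp)).hasFDerivAt).comp p (A.hasFDerivAt.const_add a)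
  have hhd : DifferentiableOn ℂ (fun p => (fderiv ℂ f (a + A p)).det)
      {p : ℂ × ℂ | a + A p ∈ U} :=
    hdetd.comp (by fun_prop : Differentiable ℂ fun p => a + A p).differentiableOn fun p hp => hp
  refine not_injOn_of_fderiv_eq_zero_on_zero_set (p₀ := (0, 0)) hW hhd
    (fun p hp => (hfA p hp).differentiableAt.differentiableWithinAt) ?_ ?_ ?_ ?_ ?_
  · intro p hp hp0
    rw [(hfA p hp).fderiv, hdet0 _ hp hp0, ContinuousLinearMap.zero_comp]
  · simpa [hA] using ha
  · simpa [hA] using hdeta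
  · intro hev
    set S : Set ℂ := {t | a + t • v ∈ ball a r}
    have hSopen : IsOpen S := isOpen_ball.preimage (by fun_prop)
    have hSconv : Convex ℝ S := by
      have : S = (fun t : ℂ => t • v) ⁻¹' ball 0 r := by
        ext t
        simp [S]
      rw [this]
      exact (convex_ball (0 : E) r).is_linear_preimage
        ⟨fun x y => add_smul x y v, fun c x => smul_assoc c x v⟩
    have hSd : DifferentiableOn ℂ (fun t : ℂ => (fderiv ℂ f (a + t • v)).det) S :=
      hdetd.comp (by fun_prop : Differentiable ℂ fun t : ℂ => a + t • v).differentiableOn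
        fun t ht => hrU ht
    have h0S : (0 : ℂ) ∈ S := by simpa [S] using hr
    have h1S : (1 : ℂ) ∈ S := by simpa [S, v, ← dist_eq_norm] using hb
    have := (hSd.analyticOnNhd hSopen).eqOn_zero_of_preconnected_of_eventuallyEq_zero
      hSconv.isPreconnected h0S (by simpa [hA, EventuallyEq] using hev) h1S
    exact hbdet (by simpa [v] using this)
  · intro p hp q hq hpq
    exact hAinj (add_left_cancel (hinj hp hq hpq))

end

/-- Osgood's theorem: the derivative of an injective holomorphic map between open subsets of the
same finite-dimensional space is everywhere injective. -/
theorem fderiv_injective_of_injOn {E : Type*} [NormedAddCommGroup E] [NormedSpace ℂ E]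
    [FiniteDimensional ℂ E] {f : E → E} {U : Set E} (hU : IsOpen U)
    (hf : DifferentiableOn ℂ f U) (hinj : InjOn f U) {a : E} (ha : a ∈ U) :
    Function.Injective (fderiv ℂ f a) := by
  induction hn : Module.finrank ℂ E generalizing E with
  | zero =>
    have := Module.finrank_zero_iff.mp hn
    exact Function.injective_of_subsingleton _
  | succ n ih =>
    have hdich : ∀ z ∈ U, fderiv ℂ f z ≠ 0 → Function.Injective (fderiv ℂ f z) := fun z hz =>
      fderiv_injective_of_fderiv_ne_zero hn
        (fun K hK g V hV hg hginj b hb => ih hV hg hginj hb hK) hU hf hinj hz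
    refine hdich a ha ?_
    rcases Nat.eq_zero_or_pos n with rfl | hpos
    · exact fderiv_ne_zero_of_injOn_of_finrank_eq_one hn hU hf hinj ha
    · exact fderiv_ne_zero_of_injOn_of_one_lt_finrank (by omega) hU hf hinj hdich ha

section

variable {E : Type*} [NormedAddCommGroup E] [NormedSpace ℂ E] [FiniteDimensional ℂ E] {ι : Type*}

/-- Hurwitz's theorem on a disc, along an ultrafilter. -/
theorem eventually_eq_zero_of_ultrafilter_tendsto {l : Ultrafilter ι} {h : ι → ℂ → ℂ}
    {g : ℂ → ℂ} {z : ℂ} {R C : ℝ} (hR : 0 < R)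
    (hh : ∀ᶠ i in (l : Filter ι), DifferentiableOn ℂ (h i) (ball z R) ∧
      (∀ y ∈ ball z R, ‖h i y‖ ≤ C) ∧ ∀ y ∈ ball z R, h i y ≠ 0)
    (hg : ∀ y ∈ ball z R, Tendsto (fun i => h i y) l (𝓝 (g y))) (hz : g z = 0) :
    ∀ᶠ y in 𝓝 z, g y = 0 := by
  have hgd : DifferentiableOn ℂ g (ball z R) := by
    intro y hy
    obtain ⟨δ, hδ, hδR⟩ := Metric.isOpen_iff.mp isOpen_ball y hy
    exact (hasFDerivAt_of_ultrafilter_tendsto hδ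
      (hh.mono fun i hi => ⟨hi.1.mono hδR, fun x hx => hi.2.1 x (hδR hx)⟩)
      fun x hx => hg x (hδR hx)).1.differentiableWithinAt
  have hga : AnalyticAt ℂ g z := hgd.analyticAt (isOpen_ball.mem_nhds (mem_ball_self hR))
  rcases hga.eventually_eq_zero_or_eventually_ne_zero with h0 | hne
  · exact h0
  exfalso
  obtain ⟨δ, hδ, hδne⟩ := Metric.eventually_nhds_iff_ball.mp (eventually_nhdsWithin_iff.mp hne)
  set ρ := min (δ / 2) (R / 2)
  have hρ : 0 < ρ := by positivity
  have hρδ : ρ < δ := (min_le_left _ _).trans_lt (by linarith)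
  have hρR : ρ < R := (min_le_right _ _).trans_lt (by linarith)
  have hsub : closedBall z ρ ⊆ ball z R := closedBall_subset_ball hρR
  have hmin : ∀ᶠ i in (l : Filter ι), ∃ t ∈ sphere z ρ, ‖h i t‖ ≤ ‖h i z‖ := by
    filter_upwards [hh] with i hi
    by_contra! hlt
    obtain ⟨t, ht, hmt⟩ := (isCompact_sphere z ρ).exists_isMinOn
      (NormedSpace.sphere_nonempty.mpr hρ.le)
      ((hi.1.continuousOn.mono (sphere_subset_closedBall.trans hsub)).norm)
    obtain ⟨s, hs, hs0⟩ := exists_eq_zero_of_norm_lt_on_sphere hρ (hi.1.mono hsub)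
      (fun s hs => hmt hs) (hlt t ht)
    exact hi.2.2 s (hsub hs) hs0
  obtain ⟨t, ht⟩ := hmin.choice
  obtain ⟨t₀, ht₀⟩ := Ultrafilter.exists_tendsto_of_norm_le (C := ρ + ‖z‖) l (x := t) <|
    ht.mono fun i hi => by
      have h₁ : ‖t i - z‖ = ρ := mem_sphere_iff_norm.mp hi.1
      calc ‖t i‖ = ‖t i - z + z‖ := by rw [sub_add_cancel]
        _ ≤ ρ + ‖z‖ := h₁ ▸ norm_add_le _ _
  have ht₀s : t₀ ∈ sphere z ρ := isClosed_sphere.mem_of_tendsto ht₀ (ht.mono fun i hi => hi.1)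
  have ht₀R : t₀ ∈ ball z R := hsub (sphere_subset_closedBall ht₀s)
  obtain ⟨r, hr, hrR⟩ := Metric.isOpen_iff.mp isOpen_ball t₀ ht₀R
  have hlim : Tendsto (fun i => h i (t i)) l (𝓝 (g t₀)) :=
    tendsto_apply_of_norm_le_on_ball hr
      (hh.mono fun i hi => ⟨hi.1.mono hrR, fun x hx => hi.2.1 x (hrR hx)⟩) ht₀ (hg t₀ ht₀R)
  have hle : ‖g t₀‖ ≤ ‖g z‖ :=
    le_of_tendsto_of_tendsto hlim.norm (hg z (mem_ball_self hR)).norm (ht.mono fun i hi => hi.2)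
  rw [hz, norm_zero, norm_le_zero_iff] at hle
  refine hδne t₀ ?_ ?_ hle
  · rw [mem_ball, mem_sphere.mp ht₀s]
    exact hρδ
  · rintro rfl
    simp [hρ.ne] at ht₀s

/-- Pointwise limits of locally bounded holomorphic maps are holomorphic. -/
theorem differentiableOn_of_ultrafilter_tendsto {F : Type*} [NormedAddCommGroup F]
    [NormedSpace ℂ F] [FiniteDimensional ℂ F] {l : Ultrafilter ι} {f : ι → E → F} {g : E → F} {U : Set E}
    (hf : ∀ z ∈ U, ∃ R > 0, ∃ C, ball z R ⊆ U ∧ ∀ᶠ i in (l : Filter ι),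
      DifferentiableOn ℂ (f i) (ball z R) ∧ ∀ y ∈ ball z R, ‖f i y‖ ≤ C)
    (hg : ∀ y ∈ U, Tendsto (fun i => f i y) l (𝓝 (g y))) : DifferentiableOn ℂ g U := by
  intro z hz
  obtain ⟨R, hR, C, hRU, hi⟩ := hf z hz
  exact (hasFDerivAt_of_ultrafilter_tendsto hR hi
    fun y hy => hg y (hRU hy)).1.differentiableWithinAt

/-- Hurwitz's theorem along an ultrafilter: a pointwise limit of locally bounded nowhere vanishing
holomorphic functions on a preconnected set vanishes nowhere if it is nonzero at one point. -/
theorem ne_zero_of_ultrafilter_tendsto {l : Ultrafilter ι} {h : ι → E → ℂ} {g : E → ℂ}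
    {U : Set E} (hU : IsPreconnected U)
    (hh : ∀ z ∈ U, ∃ R > 0, ∃ C, ball z R ⊆ U ∧ ∀ᶠ i in (l : Filter ι),
      DifferentiableOn ℂ (h i) (ball z R) ∧ (∀ y ∈ ball z R, ‖h i y‖ ≤ C) ∧
        ∀ y ∈ ball z R, h i y ≠ 0)
    (hg : ∀ y ∈ U, Tendsto (fun i => h i y) l (𝓝 (g y))) {p : E} (hp : p ∈ U) (hgp : g p ≠ 0)
    {z : E} (hz : z ∈ U) : g z ≠ 0 := by
  have hUopen : IsOpen U := by
    rw [Metric.isOpen_iff]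
    intro y hy
    obtain ⟨R, hR, C, hRU, -⟩ := hh y hy
    exact ⟨R, hR, hRU⟩
  have hgd : DifferentiableOn ℂ g U := by
    refine differentiableOn_of_ultrafilter_tendsto (fun y hy => ?_) hg
    obtain ⟨R, hR, C, hRU, hi⟩ := hh y hy
    exact ⟨R, hR, C, hRU, hi.mono fun i hi => ⟨hi.1, hi.2.1⟩⟩
  have hopen : IsOpen (U ∩ g ⁻¹' {0}ᶜ) :=
    hgd.continuousOn.isOpen_inter_preimage hUopen isOpen_compl_singleton
  refine (hU.subset_of_closure_inter_subset hopen ⟨p, hp, hp, hgp⟩ ?_ hz).2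
  rintro y ⟨hycl, hyU⟩
  refine ⟨hyU, fun hy0 => ?_⟩
  obtain ⟨R, hR, C, hRU, hi⟩ := hh y hyU
  obtain ⟨b, ⟨hbU, hgb⟩, hyb⟩ := Metric.mem_closure_iff.mp hycl R hR
  refine hgb ?_
  have hd : 0 < dist y b := by
    rw [dist_pos]
    rintro rfl
    exact hgb hy0
  have hmaps : MapsTo (fun t : ℂ => y + t • (b - y)) (ball 0 (R / dist y b)) (ball y R) := by
    intro t ht
    rw [mem_ball_zero_iff, lt_div_iff₀ hd, dist_comm, dist_eq_norm] at ht
    rwa [mem_ball, dist_self_add_left, norm_smul]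
  have hline : Differentiable ℂ fun t : ℂ => y + t • (b - y) := by fun_prop
  have hr : 0 < R / dist y b := by positivity
  have hev : ∀ᶠ t in 𝓝 (0 : ℂ), g (y + t • (b - y)) = 0 :=
    eventually_eq_zero_of_ultrafilter_tendsto (h := fun i t => h i (y + t • (b - y))) hr
      (hi.mono fun i hi => ⟨hi.1.comp hline.differentiableOn hmaps,
        fun t ht => hi.2.1 _ (hmaps ht), fun t ht => hi.2.2 _ (hmaps ht)⟩)
      (fun t ht => hg _ (hRU (hmaps ht))) (by simpa using hy0)
  have hgl : DifferentiableOn ℂ (fun t : ℂ => g (y + t • (b - y))) (ball 0 (R / dist y b)) :=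
    hgd.comp hline.differentiableOn fun t ht => hRU (hmaps ht)
  have h1 : (1 : ℂ) ∈ ball (0 : ℂ) (R / dist y b) := by
    rw [mem_ball_zero_iff, norm_one, one_lt_div hd]
    exact hyb
  have := (hgl.analyticOnNhd isOpen_ball).eqOn_zero_of_preconnected_of_eventuallyEq_zero
    (convex_ball _ _).isPreconnected (mem_ball_self hr) hev h1
  simpa using this

/-- If the limit `g` of uniformly bounded holomorphic maps `f i` on a ball has invertible derivative
at the centre `z`, then the image of the ball under `f i` eventually contains `g z`. -/
theorem eventually_mem_image_ball_of_ultrafilter_tendsto [Nontrivial E] {l : Ultrafilter ι}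
    {f : ι → E → E} {g : E → E} {z : E} {R C : ℝ} (hR : 0 < R)
    (hf : ∀ᶠ i in (l : Filter ι),
      DifferentiableOn ℂ (f i) (ball z R) ∧ ∀ y ∈ ball z R, ‖f i y‖ ≤ C)
    (hg : ∀ y ∈ ball z R, Tendsto (fun i => f i y) l (𝓝 (g y)))
    (hdet : (fderiv ℂ g z).det ≠ 0) : ∀ᶠ i in (l : Filter ι), g z ∈ f i '' ball z R := by
  have hlim := (hasFDerivAt_of_ultrafilter_tendsto hR hf hg).2
  set e := (fderiv ℂ g z).toContinuousLinearEquivOfDetNeZero hdet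
  have he : (e : E →L[ℂ] E) = fderiv ℂ g z := by ext; simp [e]
  rw [← he] at hlim
  set c : NNReal := ‖(e.symm : E →L[ℂ] E)‖₊⁻¹ / 2
  have hc : 0 < c := half_pos (inv_pos.mpr e.nnnorm_symm_pos)
  have hc2 : (‖(e.symm : E →L[ℂ] E)‖₊ : ℝ)⁻¹ = 2 * c := by simp [c]; ring
  have hcR : (0 : ℝ) < c := hc
  have hC : 0 ≤ C := by
    obtain ⟨i, hi⟩ := hf.exists
    exact (norm_nonneg _).trans (hi.2 z (mem_ball_self hR))
  set K := 2 * (2 * C / (R / 2)) / (R / 2)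
  have hK : 0 ≤ K := by positivity
  set ρ := min (R / 4) (c / 2 / (K + 1))
  have hρ : 0 < ρ := by positivity
  have hρR : ρ < R / 2 := (min_le_left _ _).trans_lt (by linarith)
  have hKρ : K * ρ ≤ c / 2 := by
    have h₁ : ρ * (K + 1) ≤ c / 2 := (le_div_iff₀ (by positivity)).mp (min_le_right _ _)
    nlinarith
  have hsub : closedBall z ρ ⊆ ball z R := closedBall_subset_ball (by linarith)
  have hnear : ∀ᶠ i in (l : Filter ι), dist (fderiv ℂ (f i) z) (e : E →L[ℂ] E) < c / 2 :=
    hlim.eventually (ball_mem_nhds _ (by positivity))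
  have hval : ∀ᶠ i in (l : Filter ι), dist (f i z) (g z) < c * ρ :=
    (hg z (mem_ball_self hR)).eventually (ball_mem_nhds _ (by positivity))
  filter_upwards [hf, hnear, hval] with i hi hi' hi''
  have hfd : DifferentiableOn ℂ (fderiv ℂ (f i)) (ball z (R / 2)) :=
    (hi.1.fderiv_of_isOpen isOpen_ball).mono (ball_subset_ball (by linarith))
  have hfb : ∀ y ∈ ball z (R / 2), ‖fderiv ℂ (f i) y‖ ≤ 2 * C / (R / 2) := by
    intro y hy
    have hyR : ball y (R / 2) ⊆ ball z R := ball_subset_ball' (by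
      have := mem_ball.mp hy
      linarith)
    exact norm_fderiv_le_of_norm_le_on_ball (by positivity) (hi.1.mono hyR)
      fun x hx => hi.2 x (hyR hx)
  have happrox : ApproximatesLinearOn (f i) (e : E →L[ℂ] E) (closedBall z ρ) c := by
    intro x hx y hy
    refine (convex_closedBall z ρ).norm_image_sub_le_of_norm_fderiv_le' (𝕜 := ℂ)
      (fun w hw => hi.1.differentiableAt (isOpen_ball.mem_nhds (hsub hw))) (fun w hw => ?_) hy hx
    have h₁ : dist (fderiv ℂ (f i) w) (fderiv ℂ (f i) z) ≤ K * dist w z :=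
      dist_le_of_norm_le_on_ball hfd hfb (closedBall_subset_ball hρR hw)
    have h₂ : K * dist w z ≤ K * ρ := by gcongr; exact hw
    rw [← dist_eq_norm]
    linarith [dist_triangle (fderiv ℂ (f i) w) (fderiv ℂ (f i) z) (e : E →L[ℂ] E)]
  have hsurj := happrox.surjOn_closedBall_of_nonlinearRightInverse e.toNonlinearRightInverse
    hρ.le subset_rfl
  refine image_mono hsub (hsurj ?_)
  change dist (g z) (f i z) ≤ ((‖(e.symm : E →L[ℂ] E)‖₊ : ℝ)⁻¹ - c) * ρ
  rw [hc2, dist_comm]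
  linarith

/-- A limit of locally injective holomorphic maps into a bounded set `V` maps into `V` as soon as
its derivative is invertible at one point. -/
theorem mapsTo_of_ultrafilter_tendsto [Nontrivial E] {l : Ultrafilter ι} {f : ι → E → E}
    {g : E → E} {U V : Set E} (hU : IsPreconnected U) (hV : Bornology.IsBounded V)
    (hf : ∀ z ∈ U, ∃ R > 0, ball z R ⊆ U ∧ ∀ᶠ i in (l : Filter ι),
      DifferentiableOn ℂ (f i) (ball z R) ∧ InjOn (f i) (ball z R) ∧ MapsTo (f i) (ball z R) V)
    (hg : ∀ y ∈ U, Tendsto (fun i => f i y) l (𝓝 (g y))) {p : E} (hp : p ∈ U)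
    (hdet : (fderiv ℂ g p).det ≠ 0) : MapsTo g U V := by
  obtain ⟨C, hC⟩ := hV.exists_norm_le
  have : ProperSpace (E →L[ℂ] E) := FiniteDimensional.proper ℂ _
  have hlim : ∀ y ∈ U, Tendsto (fun i => fderiv ℂ (f i) y) l (𝓝 (fderiv ℂ g y)) := by
    intro y hy
    obtain ⟨R, hR, hRU, hi⟩ := hf y hy
    exact (hasFDerivAt_of_ultrafilter_tendsto hR
      (hi.mono fun i hi => ⟨hi.1, fun x hx => hC _ (hi.2.2 hx)⟩) fun x hx => hg x (hRU hx)).2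
  have hdetne : ∀ y ∈ U, (fderiv ℂ g y).det ≠ 0 := by
    intro y hy
    refine ne_zero_of_ultrafilter_tendsto (l := l) (h := fun i z => (fderiv ℂ (f i) z).det)
      (g := fun z => (fderiv ℂ g z).det) hU ?_
      (fun x hx => (differentiable_det.continuous.tendsto _).comp (hlim x hx)) hp hdet hy
    intro z hz
    obtain ⟨R, hR, hRU, hi⟩ := hf z hz
    obtain ⟨C', hC'⟩ := (isCompact_closedBall (0 : E →L[ℂ] E)
      (2 * C / (R / 2))).exists_bound_of_continuousOn differentiable_det.continuous.continuousOn
    have hsub : ball z (R / 2) ⊆ ball z R := ball_subset_ball (by linarith)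
    refine ⟨R / 2, by positivity, C', hsub.trans hRU, ?_⟩
    filter_upwards [hi] with i hi
    refine ⟨Differentiable.comp_differentiableOn (g := fun A : E →L[ℂ] E => A.det)
      differentiable_det ((hi.1.fderiv_of_isOpen isOpen_ball).mono hsub), fun x hx => hC' _ ?_,
      fun x hx => ContinuousLinearMap.det_ne_zero_iff_injective.mpr
        (fderiv_injective_of_injOn isOpen_ball hi.1 hi.2.1 (hsub hx))⟩
    have hxR : ball x (R / 2) ⊆ ball z R := ball_subset_ball' (by
      have := mem_ball.mp hx
      linarith)
    rw [mem_closedBall_zero_iff]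
    exact norm_fderiv_le_of_norm_le_on_ball (by positivity) (hi.1.mono hxR)
      fun w hw => hC _ (hi.2.2 (hxR hw))
  intro z hz
  obtain ⟨R, hR, hRU, hi⟩ := hf z hz
  obtain ⟨i, ⟨y, hy, hyz⟩, hi'⟩ := ((eventually_mem_image_ball_of_ultrafilter_tendsto hR
    (hi.mono fun i hi => ⟨hi.1, fun x hx => hC _ (hi.2.2 hx)⟩) (fun x hx => hg x (hRU hx))
    (hdetne z hz)).and hi).exists
  exact hyz ▸ hi'.2.2 hy

/-- The image of an open set under an injective holomorphic map is open, and any left inverse is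
holomorphic on it. -/
theorem isOpen_image_and_differentiableOn_of_leftInvOn {f g : E → E} {U : Set E} (hU : IsOpen U)
    (hf : DifferentiableOn ℂ f U) (hg : LeftInvOn g f U) :
    IsOpen (f '' U) ∧ DifferentiableOn ℂ g (f '' U) := by
  have hstrict : ∀ z ∈ U, ∃ e : E ≃L[ℂ] E, HasStrictFDerivAt f (e : E →L[ℂ] E) z := by
    intro z hz
    have hdet := ContinuousLinearMap.det_ne_zero_iff_injective.mpr
      (fderiv_injective_of_injOn hU hf hg.injOn hz)
    refine ⟨(fderiv ℂ f z).toContinuousLinearEquivOfDetNeZero hdet, ?_⟩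
    exact hf.hasStrictFDerivAt hU hz
  have hnhds : ∀ z ∈ U, ∀ s ∈ 𝓝 z, f '' s ∈ 𝓝 (f z) := by
    intro z hz s hs
    obtain ⟨e, he⟩ := hstrict z hz
    rw [← he.map_nhds_eq_of_equiv]
    exact image_mem_map hs
  refine ⟨isOpen_iff_mem_nhds.mpr ?_, ?_⟩
  · rintro _ ⟨z, hz, rfl⟩
    exact hnhds z hz U (hU.mem_nhds hz)
  · rintro _ ⟨z, hz, rfl⟩
    obtain ⟨e, he⟩ := hstrict z hz
    have hcont : ContinuousAt g (f z) := by
      intro s hs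
      rw [hg hz] at hs
      rw [Filter.mem_map]
      filter_upwards [hnhds z hz _ (inter_mem hs (hU.mem_nhds hz))]
      rintro _ ⟨y, ⟨hys, hyU⟩, rfl⟩
      rwa [mem_preimage, hg hyU]
    refine (HasFDerivAt.of_local_left_inverse (f := f) (f' := e) hcont (by
      rw [hg hz]; exact he.hasFDerivAt) ?_).differentiableAt.differentiableWithinAt
    filter_upwards [hnhds z hz U (hU.mem_nhds hz)]
    rintro _ ⟨y, hyU, rfl⟩
    rw [hg hyU]

end

theorem stmt11 (N : ℕ) (hN : 1 ≤ N)
    (D M : Set (Fin N → ℂ))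
    (hDopen : IsOpen D) (hDconn : IsConnected D) (hDbdd : Bornology.IsBounded D)
    (hMopen : IsOpen M) (hMconn : IsConnected M) (hMbdd : Bornology.IsBounded M)
    (hhom : ∀ p ∈ D, ∀ q ∈ D,
      ∃ φ ψ : (Fin N → ℂ) → (Fin N → ℂ),
        DifferentiableOn ℂ φ D ∧ Set.BijOn φ D D ∧
        DifferentiableOn ℂ ψ D ∧
        (∀ z ∈ D, ψ (φ z) = z) ∧ (∀ z ∈ D, φ (ψ z) = z) ∧ φ p = q)
    (hexh : ∀ K : Set (Fin N → ℂ), K ⊆ M → IsCompact K →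
      ∃ f : (Fin N → ℂ) → (Fin N → ℂ),
        DifferentiableOn ℂ f D ∧ Set.InjOn f D ∧ Set.MapsTo f D M ∧ K ⊆ f '' D) :
    ∃ F G : (Fin N → ℂ) → (Fin N → ℂ),
      DifferentiableOn ℂ F D ∧ Set.BijOn F D M ∧
      DifferentiableOn ℂ G M ∧
      (∀ z ∈ D, G (F z) = z) ∧ (∀ w ∈ M, F (G w) = w) := by
  obtain ⟨p₀, hp₀⟩ := hDconn.nonempty
  obtain ⟨q₀, hq₀⟩ := hMconn.nonempty
  have : Nonempty (Fin N) := ⟨⟨0, hN⟩⟩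
  obtain ⟨CD, hCD⟩ := hDbdd.exists_norm_le
  obtain ⟨CM, hCM⟩ := hMbdd.exists_norm_le
  have hex : ∀ K : TopologicalSpace.Compacts M, ∃ f : (Fin N → ℂ) → (Fin N → ℂ),
      DifferentiableOn ℂ f D ∧ InjOn f D ∧ MapsTo f D M ∧ f p₀ = q₀ ∧
        Subtype.val '' (K : Set M) ⊆ f '' D := by
    intro K
    obtain ⟨f, hfd, hfi, hfm, hfK⟩ := hexh (insert q₀ (Subtype.val '' (K : Set M)))
      (insert_subset hq₀ (Subtype.coe_image_subset M _))
      ((K.isCompact.image continuous_subtype_val).insert q₀)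
    obtain ⟨p, hp, hpq⟩ := hfK (mem_insert _ _)
    obtain ⟨φ, -, hφd, hφ, -, -, -, hφp⟩ := hhom p₀ hp₀ p hp
    refine ⟨f ∘ φ, hfd.comp hφd hφ.mapsTo, hfi.comp hφ.injOn hφ.mapsTo, hfm.comp hφ.mapsTo,
      by simp [hφp, hpq], ?_⟩
    rw [image_comp, hφ.image_eq]
    exact (subset_insert _ _).trans hfK
  choose f hfd hfi hfm hfp hfK using hex
  set g := fun K => Function.invFunOn (f K) D
  have hgf : ∀ K, LeftInvOn (g K) (f K) D := fun K => (hfi K).leftInvOn_invFunOn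
  have hfg : ∀ K, ∀ w ∈ f K '' D, f K (g K w) = w := fun K w hw => Function.invFunOn_eq hw
  have hgm : ∀ K, MapsTo (g K) (f K '' D) D := fun K w hw => Function.invFunOn_mem hw
  have hgd : ∀ K, DifferentiableOn ℂ (g K) (f K '' D) := fun K =>
    (isOpen_image_and_differentiableOn_of_leftInvOn hDopen (hfd K) (hgf K)).2
  set l : Ultrafilter (TopologicalSpace.Compacts M) := Ultrafilter.of atTop
  have hfloc : ∀ z ∈ D, ∃ R > 0, ball z R ⊆ D ∧ ∀ᶠ K in (l : Filter _),
      DifferentiableOn ℂ (f K) (ball z R) ∧ InjOn (f K) (ball z R) ∧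
        MapsTo (f K) (ball z R) M := by
    intro z hz
    obtain ⟨R, hR, hRD⟩ := Metric.isOpen_iff.mp hDopen z hz
    exact ⟨R, hR, hRD, .of_forall fun K =>
      ⟨(hfd K).mono hRD, (hfi K).mono hRD, (hfm K).mono_left hRD⟩⟩
  have hball : ∀ w ∈ M, ∃ R > 0, ball w R ⊆ M ∧ ∀ᶠ K in (l : Filter _),
      ball w R ⊆ f K '' D := by
    intro w hw
    obtain ⟨R, hR, hRM⟩ := Metric.nhds_basis_closedBall.mem_iff.mp (hMopen.mem_nhds hw)
    have hpre : Subtype.val '' (Subtype.val ⁻¹' closedBall w R : Set M) = closedBall w R := by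
      rw [Subtype.image_preimage_coe, inter_eq_right.mpr hRM]
    have hcomp : IsCompact (Subtype.val ⁻¹' closedBall w R : Set M) := by
      rw [Subtype.isCompact_iff, hpre]
      exact isCompact_closedBall w R
    refine ⟨R, hR, ball_subset_closedBall.trans hRM, Ultrafilter.of_le atTop ?_⟩
    filter_upwards [eventually_ge_atTop ⟨_, hcomp⟩] with K hK
    calc ball w R ⊆ closedBall w R := ball_subset_closedBall
      _ = Subtype.val '' (Subtype.val ⁻¹' closedBall w R : Set M) := hpre.symm
      _ ⊆ Subtype.val '' (K : Set M) := image_mono hK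
      _ ⊆ f K '' D := hfK K
  have hgloc : ∀ w ∈ M, ∃ R > 0, ball w R ⊆ M ∧ ∀ᶠ K in (l : Filter _),
      DifferentiableOn ℂ (g K) (ball w R) ∧ InjOn (g K) (ball w R) ∧
        MapsTo (g K) (ball w R) D := by
    intro w hw
    obtain ⟨R, hR, hRM, hK⟩ := hball w hw
    exact ⟨R, hR, hRM, hK.mono fun K hK => ⟨(hgd K).mono hK,
      (Function.invFunOn_injOn_image (f K) D).mono hK, (hgm K).mono_left hK⟩⟩
  have hev : ∀ w ∈ M, ∀ᶠ K in (l : Filter _), w ∈ f K '' D := by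
    intro w hw
    obtain ⟨R, hR, -, hK⟩ := hball w hw
    exact hK.mono fun K hK => hK (mem_ball_self hR)
  have hFex : ∀ z ∈ D, ∃ y, Tendsto (fun K => f K z) l (𝓝 y) := fun z hz =>
    l.exists_tendsto_of_norm_le (.of_forall fun K => hCM _ (hfm K hz))
  have hGex : ∀ w ∈ M, ∃ y, Tendsto (fun K => g K w) l (𝓝 y) := fun w hw =>
    l.exists_tendsto_of_norm_le ((hev w hw).mono fun K hK => hCD _ (hgm K hK))
  choose! F hF using hFex
  choose! G hG using hGex
  have hfbdd : ∀ z ∈ D, ∃ R > 0, ∃ C, ball z R ⊆ D ∧ ∀ᶠ K in (l : Filter _),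
      DifferentiableOn ℂ (f K) (ball z R) ∧ ∀ y ∈ ball z R, ‖f K y‖ ≤ C := by
    intro z hz
    obtain ⟨R, hR, hRD, hK⟩ := hfloc z hz
    exact ⟨R, hR, CM, hRD, hK.mono fun K hK => ⟨hK.1, fun y hy => hCM _ (hK.2.2 hy)⟩⟩
  have hgbdd : ∀ w ∈ M, ∃ R > 0, ∃ C, ball w R ⊆ M ∧ ∀ᶠ K in (l : Filter _),
      DifferentiableOn ℂ (g K) (ball w R) ∧ ∀ y ∈ ball w R, ‖g K y‖ ≤ C := by
    intro w hw
    obtain ⟨R, hR, hRM, hK⟩ := hgloc w hw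
    exact ⟨R, hR, CD, hRM, hK.mono fun K hK => ⟨hK.1, fun y hy => hCD _ (hK.2.2 hy)⟩⟩
  have hcomp : fderiv ℂ G q₀ ∘L fderiv ℂ F p₀ = ContinuousLinearMap.id ℂ (Fin N → ℂ) := by
    obtain ⟨R, hR, C, hRD, hK⟩ := hfbdd p₀ hp₀
    obtain ⟨R', hR', C', hRM, hK'⟩ := hgbdd q₀ hq₀
    have hF' := (hasFDerivAt_of_ultrafilter_tendsto hR hK fun y hy => hF y (hRD hy)).2
    have hG' := (hasFDerivAt_of_ultrafilter_tendsto hR' hK' fun y hy => hG y (hRM hy)).2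
    refine tendsto_nhds_unique (((continuous_fst.clm_comp continuous_snd).tendsto _).comp
      (hG'.prodMk_nhds hF')) (tendsto_const_nhds.congr' ?_)
    filter_upwards [hK'] with K hK'
    have hg' : DifferentiableAt ℂ (g K) (f K p₀) :=
      hfp K ▸ hK'.1.differentiableAt (ball_mem_nhds q₀ hR')
    have hchain := hg'.hasFDerivAt.comp p₀
      ((hfd K).differentiableAt (hDopen.mem_nhds hp₀)).hasFDerivAt
    rw [hfp K] at hchain
    refine HasFDerivAt.unique ?_ hchain
    refine (hasFDerivAt_id p₀).congr_of_eventuallyEq ?_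
    filter_upwards [hDopen.mem_nhds hp₀] with z hz using hgf K hz
  have hdet : (fderiv ℂ G q₀).det * (fderiv ℂ F p₀).det = 1 := by
    have h := congrArg ContinuousLinearMap.det hcomp
    simpa [ContinuousLinearMap.det, LinearMap.det_comp] using h
  have hFM : MapsTo F D M := mapsTo_of_ultrafilter_tendsto hDconn.isPreconnected hMbdd hfloc hF
    hp₀ (right_ne_zero_of_mul_eq_one hdet)
  have hGM : MapsTo G M D := mapsTo_of_ultrafilter_tendsto hMconn.isPreconnected hDbdd hgloc hG
    hq₀ (left_ne_zero_of_mul_eq_one hdet)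
  have hGF : ∀ z ∈ D, G (F z) = z := by
    intro z hz
    obtain ⟨R, hR, C, -, hK⟩ := hgbdd (F z) (hFM hz)
    refine tendsto_nhds_unique
      (tendsto_apply_of_norm_le_on_ball hR hK (hF z hz) (hG _ (hFM hz))) ?_
    exact tendsto_const_nhds.congr fun K => (hgf K hz).symm
  have hFG : ∀ w ∈ M, F (G w) = w := by
    intro w hw
    obtain ⟨R, hR, C, -, hK⟩ := hfbdd (G w) (hGM hw)
    refine tendsto_nhds_unique
      (tendsto_apply_of_norm_le_on_ball hR hK (hG w hw) (hF _ (hGM hw))) ?_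
    exact tendsto_const_nhds.congr' ((hev w hw).mono fun K hK => (hfg K w hK).symm)
  exact ⟨F, G, differentiableOn_of_ultrafilter_tendsto hfbdd hF,
    InvOn.bijOn ⟨hGF, hFG⟩ hFM hGM, differentiableOn_of_ultrafilter_tendsto hgbdd hG, hGF, hFG⟩
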